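/- Let k ≥ 1 be an integer, V ≥ 0 and c ≥ 0 real numbers, and let u_0, u_1, …, u_k be real numbers with u_0 ≥ 0 such that for every i ∈ {1, …, k}, u_i ≥ (1/k)·V − c + (1 − 1/k)·u_{i−1}. Then u_k ≥ (1 − 1/e)·V − k·c. -/

import Mathlib

/-!
Put `p = 1/k` and `q = 1 - p`. Unrolling the recursion gives
`u_n ≥ q ^ n u_0 + (p V - c) ∑_{i < n} q ^ i`. The part of the geometric sum multiplying `V`
telescopes, `p ∑ q ^ i = 1 - q ^ n ≥ 1 - exp (-n p)`, while for the accumulated error the crude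
bound `∑ q ^ i ≤ n` suffices. Taking `n = k` turns `exp (-n p)` into `1 / e`.
-/

open Finset

section OrderedSemiring

variable {R : Type*} [Semiring R] [PartialOrder R] [IsOrderedRing R]

theorem pow_mul_add_geom_sum_mul_le {u : ℕ → R} {a b : R} (ha : 0 ≤ a) (n : ℕ)
    (h : ∀ i < n, a * u i + b ≤ u (i + 1)) :
    a ^ n * u 0 + (∑ i ∈ range n, a ^ i) * b ≤ u n := by
  have step_mono : Monotone fun x ↦ a * x + b := fun x y hxy ↦ by dsimp only; gcongr
  refine step_mono.seq_le_seq n (x := fun m ↦ a ^ m * u 0 + (∑ i ∈ range m, a ^ i) * b)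
    (by simp) (fun m _ ↦ Eq.le ?_) h
  simp only [pow_succ', geom_sum_succ, mul_add, add_mul, mul_assoc, one_mul, add_assoc]

theorem geom_sum_le_natCast {a : R} (ha₀ : 0 ≤ a) (ha₁ : a ≤ 1) (n : ℕ) :
    ∑ i ∈ range n, a ^ i ≤ n := by
  simpa using sum_le_card_nsmul (range n) (a ^ ·) 1 fun _ _ ↦ pow_le_one₀ ha₀ ha₁

end OrderedSemiring

theorem one_sub_pow_le_exp_neg_natCast_mul {p : ℝ} (hp : p ≤ 1) (n : ℕ) :
    (1 - p) ^ n ≤ Real.exp (-(n * p)) := by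
  rw [← mul_neg, Real.exp_nat_mul]
  exact pow_le_pow_left₀ (sub_nonneg.mpr hp) (Real.one_sub_le_exp_neg p) n

theorem greedy_recursion_one_sub_inv_e_general {p V c : ℝ} (hp₀ : 0 ≤ p) (hp₁ : p ≤ 1)
    (hV : 0 ≤ V) (hc : 0 ≤ c) {u : ℕ → ℝ} (hu₀ : 0 ≤ u 0) (n : ℕ)
    (hrec : ∀ i < n, p * V - c + (1 - p) * u i ≤ u (i + 1)) :
    (1 - Real.exp (-(n * p))) * V - n * c ≤ u n := by
  have hq₀ : 0 ≤ 1 - p := sub_nonneg.mpr hp₁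
  have telescope : p * ∑ i ∈ range n, (1 - p) ^ i = 1 - (1 - p) ^ n := by
    simpa using mul_neg_geom_sum (1 - p) n
  calc (1 - Real.exp (-(n * p))) * V - n * c
      ≤ (1 - (1 - p) ^ n) * V - (∑ i ∈ range n, (1 - p) ^ i) * c := by
        gcongr
        · exact one_sub_pow_le_exp_neg_natCast_mul hp₁ n
        · exact geom_sum_le_natCast hq₀ (sub_le_self 1 hp₀) n
    _ = (∑ i ∈ range n, (1 - p) ^ i) * (p * V - c) := by rw [← telescope]; ring
    _ ≤ (1 - p) ^ n * u 0 + (∑ i ∈ range n, (1 - p) ^ i) * (p * V - c) :=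
        le_add_of_nonneg_left (by positivity)
    _ ≤ u n := pow_mul_add_geom_sum_mul_le hq₀ n fun i hi ↦ by
        rw [add_comm]; exact hrec i hi

/-- The recursive amplification step: if `u_i ≥ (1/k)·V − c + (1 − 1/k)·u_{i−1}` for
`i = 1, …, k`, with `u_0 ≥ 0`, `V ≥ 0` and `c ≥ 0`, then `u_k ≥ (1 − 1/e)·V − k·c`. -/
theorem greedy_recursion_one_sub_inv_e (k : ℕ) (hk : 1 ≤ k)
    (V c : ℝ) (hV : 0 ≤ V) (hc : 0 ≤ c)
    (u : ℕ → ℝ) (hu0 : 0 ≤ u 0)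
    (hrec : ∀ i : ℕ, 1 ≤ i → i ≤ k →
      u i ≥ (1 / (k : ℝ)) * V - c + (1 - 1 / (k : ℝ)) * u (i - 1)) :
    u k ≥ (1 - 1 / Real.exp 1) * V - (k : ℝ) * c := by
  have hk' : (1 : ℝ) ≤ k := mod_cast hk
  have h := greedy_recursion_one_sub_inv_e_general (p := 1 / k) (by positivity)
    (div_le_one_of_le₀ hk' k.cast_nonneg) hV hc hu0 k fun i hi ↦ hrec (i + 1) i.succ_pos hi
  rwa [mul_one_div_cancel (by positivity), Real.exp_neg, ← one_div] at h
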